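/- Let R be a ring, N an R-module, and let f: A → B and g: B → C be injective R-linear maps such that Ext^i_R(coker f, N) = 0 and Ext^i_R(coker g, N) = 0 for all i ≥ 1. Then Ext^i_R(coker (g ∘ f), N) = 0 for all i ≥ 1. (The class of monomorphisms whose cokernel lies in the Ext-orthogonality class of N is closed under composition.) -/

import Mathlib

open CategoryTheory

universe u

namespace Paper

/-- `Ext^i_R(X, N) = 0` for all `i ≥ 1`, where `Ext` denotes the right derived functors of
`Hom` computed in the abelian category of `R`-modules. -/
def ExtVanishes (R : Type u) [Ring R] (X N : Type u)
    [AddCommGroup X] [Module R X] [AddCommGroup N] [Module R N] : Prop :=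
  ∀ i : ℕ, 1 ≤ i →
    Limits.IsZero (((Ext ℤ (ModuleCat.{u} R) i).obj
      (Opposite.op (ModuleCat.of R X))).obj (ModuleCat.of R N))

/-!
The maps `B ⧸ range f → C ⧸ range (g ∘ f) → C ⧸ range g` form a short exact sequence as soon as
`ker g ≤ range f`, and in the long exact sequence of `Ext(-, N)` the middle term vanishes when its
two neighbours do. Mathlib has this long exact sequence for `Abelian.Ext`, defined through the
derived category, but not for the derived functors `Ext`. The vanishing of either one in degree
`n + 1` says that `Hom(P, N)` is exact in degree `n + 1`, for any projective resolution `P`.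
-/

section AbelianCategory

universe w

variable {C : Type*} [Category* C] [Abelian C]

lemma subsingleton_ext_succ_iff_exact [HasExt.{w} C] {X : C} (P : ProjectiveResolution X)
    (Y : C) (n : ℕ) :
    Subsingleton (Abelian.Ext.{w} X Y (n + 1)) ↔
      Function.Exact (fun g : P.complex.X n ⟶ Y ↦ P.complex.d (n + 1) n ≫ g)
        (fun f : P.complex.X (n + 1) ⟶ Y ↦ P.complex.d (n + 2) (n + 1) ≫ f) := by
  constructor
  · refine fun _ f ↦ ⟨fun hf ↦ ?_, ?_⟩
    · exact (P.extMk_eq_zero_iff f (n + 2) rfl hf n rfl).1 (Subsingleton.elim _ _)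
    · rintro ⟨g, rfl⟩
      simp
  · refine fun hP ↦ subsingleton_of_forall_eq 0 fun α ↦ ?_
    obtain ⟨f, hf, rfl⟩ := P.extMk_surjective α (n + 2) rfl
    exact (P.extMk_eq_zero_iff f (n + 2) rfl hf n rfl).2 ((hP f).1 hf)

lemma subsingleton_ext_of_shortExact [HasExt.{w} C] {S : ShortComplex C} (hS : S.ShortExact)
    (Y : C) (n : ℕ) [Subsingleton (Abelian.Ext.{w} S.X₁ Y n)]
    [Subsingleton (Abelian.Ext.{w} S.X₃ Y n)] :
    Subsingleton (Abelian.Ext.{w} S.X₂ Y n) := by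
  refine subsingleton_of_forall_eq 0 fun α ↦ ?_
  obtain ⟨β, rfl⟩ := Abelian.Ext.contravariant_sequence_exact₂ hS Y α (Subsingleton.elim _ _)
  rw [Subsingleton.elim β 0, Abelian.Ext.comp_zero]

variable (k : Type*) [Ring k] [Linear k C]

lemma isZero_homology_linearYonedaObj_succ_iff_exact (K : ChainComplex C ℕ) (Y : C) (n : ℕ) :
    Limits.IsZero ((K.linearYonedaObj k Y).homology (n + 1)) ↔
      Function.Exact (fun g : K.X n ⟶ Y ↦ K.d (n + 1) n ≫ g)
        (fun f : K.X (n + 1) ⟶ Y ↦ K.d (n + 2) (n + 1) ≫ f) := by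
  rw [← HomologicalComplex.exactAt_iff_isZero_homology,
    HomologicalComplex.exactAt_iff' _ n (n + 1) (n + 2) (by simp) (by simp),
    ShortComplex.ShortExact.moduleCat_exact_iff_function_exact]
  rfl

lemma isZero_ext_succ_iff_subsingleton [EnoughProjectives C] [HasExt.{w} C] (X Y : C) (n : ℕ) :
    Limits.IsZero (((Ext k C (n + 1)).obj (Opposite.op X)).obj Y) ↔
      Subsingleton (Abelian.Ext.{w} X Y (n + 1)) := by
  obtain ⟨P⟩ := HasProjectiveResolution.out (Z := X)
  rw [(P.isoExt (R := k) (n + 1) Y).isZero_iff, isZero_homology_linearYonedaObj_succ_iff_exact,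
    subsingleton_ext_succ_iff_exact P]

end AbelianCategory

section Quotient

variable {R M M' : Type*} [Ring R] [AddCommGroup M] [Module R M] [AddCommGroup M'] [Module R M']
  {p : Submodule R M} {q : Submodule R M'} {f : M →ₗ[R] M'}

lemma mapQ_injective_iff (hpq : p ≤ q.comap f) :
    Function.Injective (p.mapQ q f hpq) ↔ q.comap f ≤ p := by
  rw [← LinearMap.ker_eq_bot, Submodule.ker_mapQ, ← le_bot_iff, Submodule.map_le_iff_le_comap,
    Submodule.comap_bot, Submodule.ker_mkQ]

lemma exact_mapQ_factor_range (hpq : p ≤ q.comap f) (hq : q ≤ LinearMap.range f) :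
    Function.Exact (p.mapQ q f hpq) (Submodule.factor hq) := by
  rw [LinearMap.exact_iff, Submodule.ker_mapQ, Submodule.range_mapQ, Submodule.comap_id]

end Quotient

lemma extVanishes_iff_subsingleton {R : Type u} [Ring R] {X N : Type u}
    [AddCommGroup X] [Module R X] [AddCommGroup N] [Module R N] :
    ExtVanishes R X N ↔
      ∀ n : ℕ, Subsingleton (Abelian.Ext.{u} (ModuleCat.of R X) (ModuleCat.of R N) (n + 1)) := by
  simp only [ExtVanishes, ← isZero_ext_succ_iff_subsingleton ℤ]
  exact ⟨fun h n ↦ h (n + 1) n.succ_pos, fun h i hi ↦ Nat.sub_add_cancel hi ▸ h (i - 1)⟩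

lemma ExtVanishes.of_exact {R : Type u} [Ring R] {X Y Z N : Type u}
    [AddCommGroup X] [Module R X] [AddCommGroup Y] [Module R Y] [AddCommGroup Z] [Module R Z]
    [AddCommGroup N] [Module R N] {φ : X →ₗ[R] Y} {ψ : Y →ₗ[R] Z}
    (hX : ExtVanishes R X N) (hZ : ExtVanishes R Z N) (hφ : Function.Injective φ)
    (hφψ : Function.Exact φ ψ) (hψ : Function.Surjective ψ) :
    ExtVanishes R Y N := by
  rw [extVanishes_iff_subsingleton] at hX hZ ⊢
  intro n
  have hS : (ModuleCat.shortComplexOfCompEqZero φ ψ hφψ.linearMap_comp_eq_zero).ShortExact :=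
    ModuleCat.shortComplex_shortExact _ hφψ hφ hψ
  have := hX n
  have := hZ n
  exact subsingleton_ext_of_shortExact hS _ (n + 1)

theorem extVanishes_cokernel_comp_general
    {R : Type u} [Ring R] (N : Type u) [AddCommGroup N] [Module R N]
    {A : Type*} {B C : Type u} [AddCommGroup A] [Module R A] [AddCommGroup B] [Module R B]
    [AddCommGroup C] [Module R C]
    (f : A →ₗ[R] B) (g : B →ₗ[R] C)
    (hfg : LinearMap.ker g ≤ LinearMap.range f)
    (hfE : ExtVanishes R (B ⧸ LinearMap.range f) N)
    (hgE : ExtVanishes R (C ⧸ LinearMap.range g) N) :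
    ExtVanishes R (C ⧸ LinearMap.range (g ∘ₗ f)) N := by
  have hcomap : (LinearMap.range (g ∘ₗ f)).comap g = LinearMap.range f := by
    rw [LinearMap.range_comp, Submodule.comap_map_eq, sup_eq_left.2 hfg]
  exact hfE.of_exact hgE ((mapQ_injective_iff hcomap.ge).2 hcomap.le)
    (exact_mapQ_factor_range hcomap.ge (LinearMap.range_comp_le_range f g))
    (Submodule.factor_surjective _)

/-- The class of monomorphisms whose cokernel lies in the Ext-orthogonality
class of `N` is closed under composition. -/
theorem extVanishes_cokernel_comp
    {R : Type u} [Ring R] (N : Type u) [AddCommGroup N] [Module R N]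
    {A B C : Type u} [AddCommGroup A] [Module R A] [AddCommGroup B] [Module R B]
    [AddCommGroup C] [Module R C]
    (f : A →ₗ[R] B) (g : B →ₗ[R] C)
    (hf : Function.Injective f) (hg : Function.Injective g)
    (hfE : ExtVanishes R (B ⧸ LinearMap.range f) N)
    (hgE : ExtVanishes R (C ⧸ LinearMap.range g) N) :
    ExtVanishes R (C ⧸ LinearMap.range (g ∘ₗ f)) N :=
  extVanishes_cokernel_comp_general N f g
    ((LinearMap.ker_eq_bot.2 hg).trans_le bot_le) hfE hgE

end Paper
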